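/- arXiv:2109.11748 — 3 statements merged into one kernel-verified Lean document; each statement's English description precedes it below -/
import Mathlib

section
/- Let Ξ = {ξ ∈ ℝ^K : Uξ ≤ t} be nonempty and bounded, where U ∈ ℝ^{W×K} and t ∈ ℝ^W. Let α ∈ ℝ, β ∈ ℝ^K, μ ∈ ℝ^K, κ ∈ ℝ^K with κ ≥ 0, and c ∈ ℝ. Then α + β^T ξ − Σ_k κ_k |ξ_k − μ_k| ≤ c for all ξ ∈ Ξ if and only if there exist π ∈ ℝ^K, τ ∈ ℝ^K, ψ ∈ ℝ^W, all componentwise nonnegative, such that π + τ = κ, β + τ = π + U^T ψ, and α + (π − τ)^T μ + ψ^T t ≤ c. -/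
open Matrix

/-!
Since `κ ≥ 0`, the robust constraint says that `βᵀξ - κᵀρ ≤ c - α` on the polyhedron of all
`(ξ, ρ)` with `U ξ ≤ t`, `ξ - ρ ≤ μ` and `-ξ - ρ ≤ -μ`. By linear programming duality (a linear
inequality holds on a nonempty polyhedron iff it is dominated by a nonnegative combination of the
defining inequalities), this amounts to the existence of multipliers `ψ, π, τ` of the three blocks.
Duality is Farkas' lemma applied to the cone over the polyhedron.
-/

section Farkas

variable {𝕜 : Type*} [Field 𝕜] [LinearOrder 𝕜] [IsStrictOrderedRing 𝕜]

-- Farkas' lemma, by Bartl's induction: if `z` shows that the generators other than `f a` do not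
-- suffice, then `f a z ≠ 0`; normalize `f a z = 1` and remove `f a` by the projection
-- `f' ↦ f' - f' z • f a`.
theorem mem_hull_image_of_forall_nonneg {ι V : Type*} [AddCommGroup V] [Module 𝕜 V]
    (s : Finset ι) (f : ι → Module.Dual 𝕜 V) (g : Module.Dual 𝕜 V)
    (h : ∀ x, (∀ i ∈ s, 0 ≤ f i x) → 0 ≤ g x) : g ∈ PointedCone.hull 𝕜 (f '' s) := by
  classical
  induction s using Finset.induction_on generalizing f g with
  | empty =>
    have hg : g = 0 := LinearMap.ext fun x =>
      le_antisymm (by simpa using h (-x) (by simp)) (h x (by simp))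
    exact hg ▸ zero_mem _
  | insert a s _ ih =>
    simp only [Finset.forall_mem_insert] at h
    rw [Finset.coe_insert, Set.image_insert_eq]
    by_cases hs : ∀ x, (∀ i ∈ s, 0 ≤ f i x) → 0 ≤ g x
    · exact Submodule.span_mono (Set.subset_insert _ _) (ih f g hs)
    obtain ⟨z, hfaz, hfz, hgz⟩ : ∃ z, f a z = 1 ∧ (∀ i ∈ s, f i z ≤ 0) ∧ 0 < g z := by
      push Not at hs
      obtain ⟨x, hfx, hgx⟩ := hs
      have hfax : f a x < 0 := lt_of_not_ge fun hax => hgx.not_ge (h x ⟨hax, hfx⟩)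
      refine ⟨(f a x)⁻¹ • x, by simp [hfax.ne], fun i hi => ?_, ?_⟩
      · simpa using mul_nonpos_of_nonpos_of_nonneg (inv_nonpos.2 hfax.le) (hfx i hi)
      · simpa using mul_pos_of_neg_of_neg (inv_neg''.2 hfax) hgx
    set C := PointedCone.hull 𝕜 (insert (f a) (f '' s))
    have smul_mem {r : 𝕜} (hr : 0 ≤ r) : r • f a ∈ C :=
      Submodule.smul_mem C ⟨r, hr⟩ (Submodule.subset_span (Set.mem_insert _ _))
    have hproj : g - g z • f a ∈ PointedCone.hull 𝕜 ((fun i => f i - f i z • f a) '' s) := by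
      refine ih _ _ fun x hx => ?_
      have := h (x - f a x • z) ⟨by simp [hfaz], fun i hi => by simpa [mul_comm] using hx i hi⟩
      simpa [mul_comm] using this
    have hle : PointedCone.hull 𝕜 ((fun i => f i - f i z • f a) '' s) ≤ C := by
      refine Submodule.span_le.2 (Set.forall_mem_image.2 fun i hi => ?_)
      have hfi : f i ∈ C :=
        Submodule.subset_span (Set.mem_insert_of_mem _ (Set.mem_image_of_mem f hi))
      rw [sub_eq_add_neg, ← neg_smul (f i z) (f a)]
      exact add_mem hfi (smul_mem (neg_nonneg.2 (hfz i hi)))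
    simpa using add_mem (hle hproj) (smul_mem hgz.le)

theorem exists_nonneg_vecMul_eq_of_forall_mulVec_nonneg {m n : Type*} [Fintype m] [Fintype n]
    (A : Matrix m n 𝕜) (c : n → 𝕜) (h : ∀ x, 0 ≤ A *ᵥ x → 0 ≤ c ⬝ᵥ x) :
    ∃ y, 0 ≤ y ∧ y ᵥ* A = c := by
  classical
  have hmem := mem_hull_image_of_forall_nonneg Finset.univ
    (fun i => dotProductBilin 𝕜 𝕜 (A i)) (dotProductBilin 𝕜 𝕜 c)
    fun x hx => h x fun i => hx i (Finset.mem_univ i)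
  rw [Finset.coe_univ, Set.image_univ, Submodule.mem_span_range_iff_exists_fun] at hmem
  obtain ⟨y, hy⟩ := hmem
  refine ⟨fun i => y i, fun i => (y i).2, funext fun j => ?_⟩
  calc ∑ i, (y i : 𝕜) * A i j = (∑ i, y i • dotProductBilin 𝕜 𝕜 (A i)) (Pi.single j 1) := by
        simp [LinearMap.sum_apply, ← Nonneg.coe_smul]
    _ = c j := by simp [hy]

end Farkas

section LinearProgramming

variable {𝕜 m n : Type*} [Field 𝕜] [LinearOrder 𝕜] [IsStrictOrderedRing 𝕜] [Fintype n]
  {A : Matrix m n 𝕜} {b : m → 𝕜} {c : n → 𝕜} {d : 𝕜}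

theorem dotProduct_nonpos_of_mulVec_nonpos (hne : ∃ x, A *ᵥ x ≤ b)
    (h : ∀ x, A *ᵥ x ≤ b → c ⬝ᵥ x ≤ d) {v : n → 𝕜} (hv : A *ᵥ v ≤ 0) : c ⬝ᵥ v ≤ 0 := by
  obtain ⟨x, hx⟩ := hne
  by_contra! hcv
  set r := (d - c ⬝ᵥ x + 1) / c ⬝ᵥ v with hr
  have hr_nonneg : 0 ≤ r := div_nonneg (by linarith [h x hx]) hcv.le
  have hray : A *ᵥ (x + r • v) ≤ b := by
    rw [mulVec_add, mulVec_smul]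
    exact add_le_of_le_of_nonpos hx (smul_nonpos_of_nonneg_of_nonpos hr_nonneg hv)
  have hbound := h _ hray
  rw [dotProduct_add, dotProduct_smul, smul_eq_mul, hr, div_mul_cancel₀ _ hcv.ne'] at hbound
  linarith

theorem dotProduct_le_mul_of_mulVec_le_smul (hne : ∃ x, A *ᵥ x ≤ b)
    (h : ∀ x, A *ᵥ x ≤ b → c ⬝ᵥ x ≤ d) {x : n → 𝕜} {s : 𝕜} (hs : 0 ≤ s)
    (hx : A *ᵥ x ≤ s • b) : c ⬝ᵥ x ≤ s * d := by
  rcases hs.eq_or_lt with rfl | hs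
  · simpa using dotProduct_nonpos_of_mulVec_nonpos hne h (by simpa using hx)
  · have hscaled := h (s⁻¹ • x) (by rwa [mulVec_smul, inv_smul_le_iff_of_pos hs])
    rwa [dotProduct_smul, smul_eq_mul, inv_mul_le_iff₀ hs] at hscaled

theorem forall_mulVec_le_dotProduct_le_iff [Fintype m] (hne : ∃ x, A *ᵥ x ≤ b) :
    (∀ x, A *ᵥ x ≤ b → c ⬝ᵥ x ≤ d) ↔ ∃ y, 0 ≤ y ∧ y ᵥ* A = c ∧ y ⬝ᵥ b ≤ d := by
  constructor
  · intro h
    -- In the unknowns `(v, s)`, this matrix gives the homogenized system `A v ≤ s b`, `0 ≤ s`.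
    set M : Matrix (m ⊕ Unit) (n ⊕ Unit) 𝕜 :=
      fromBlocks (-A) (replicateCol Unit b) 0 1 with hM
    have hcone : ∀ z, 0 ≤ M *ᵥ z → 0 ≤ Sum.elim (-c) (fun _ => d) ⬝ᵥ z := fun z hz => by
      obtain ⟨v, s, rfl⟩ : ∃ v s, z = Sum.elim v fun _ => s :=
        ⟨z ∘ Sum.inl, z (Sum.inr ()), (Sum.elim_comp_inl_inr z).symm⟩
      have hs : 0 ≤ s := by simpa [hM, fromBlocks_mulVec] using hz (Sum.inr ())
      have hv : A *ᵥ v ≤ s • b := fun i => by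
        simpa [hM, fromBlocks_mulVec, neg_mulVec, mulVec, dotProduct, mul_comm]
          using hz (Sum.inl i)
      simpa [mul_comm] using dotProduct_le_mul_of_mulVec_le_smul hne h hs hv
    obtain ⟨y, hy, hyM⟩ := exists_nonneg_vecMul_eq_of_forall_mulVec_nonneg M _ hcone
    simp only [hM, vecMul_fromBlocks, Sum.elim_eq_iff, vecMul_neg, vecMul_zero, add_zero, neg_inj,
      vecMul_one] at hyM
    refine ⟨y ∘ Sum.inl, fun i => hy (Sum.inl i), hyM.1, ?_⟩
    calc y ∘ Sum.inl ⬝ᵥ b ≤ y ∘ Sum.inl ⬝ᵥ b + y (Sum.inr ()) :=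
          le_add_of_nonneg_right (hy (Sum.inr ()))
      _ = d := congrFun hyM.2 ()
  · rintro ⟨y, hy, rfl, hyb⟩ x hx
    rw [← dotProduct_mulVec]
    exact (dotProduct_le_dotProduct_of_nonneg_left hx hy).trans hyb

end LinearProgramming

section Epigraph

variable {𝕜 m n : Type*} [Ring 𝕜]

theorem sub_sum_mul_abs_le_iff [LinearOrder 𝕜] [IsOrderedRing 𝕜] [Fintype n] {κ : n → 𝕜}
    (hκ : 0 ≤ κ) (v : n → 𝕜) (a c : 𝕜) :
    a - ∑ k, κ k * |v k| ≤ c ↔ ∀ ρ, |v| ≤ ρ → a - κ ⬝ᵥ ρ ≤ c :=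
  ⟨fun h _ hρ => (sub_le_sub_left (dotProduct_le_dotProduct_of_nonneg_left hρ hκ) a).trans h,
    fun h => h |v| le_rfl⟩

variable [DecidableEq n]

/-- The coefficient matrix of the system `U ξ ≤ t`, `ξ - ρ ≤ μ`, `-ξ - ρ ≤ -μ` in the unknowns
`(ξ, ρ)`, i.e. of the support constraints together with the epigraph constraints `ρ ≥ ±(ξ - μ)`. -/
def madEpigraphMatrix (U : Matrix m n 𝕜) : Matrix (m ⊕ n ⊕ n) (n ⊕ n) 𝕜 :=
  fromBlocks U 0 (fromRows 1 (-1)) (fromRows (-1) (-1))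

theorem madEpigraphMatrix_mulVec_le_iff [LinearOrder 𝕜] [IsOrderedRing 𝕜] [Fintype n]
    (U : Matrix m n 𝕜) (t : m → 𝕜) (μ ξ ρ : n → 𝕜) :
    madEpigraphMatrix U *ᵥ Sum.elim ξ ρ ≤ Sum.elim t (Sum.elim μ (-μ)) ↔
      U *ᵥ ξ ≤ t ∧ |ξ - μ| ≤ ρ := by
  have hmul : madEpigraphMatrix U *ᵥ Sum.elim ξ ρ =
      Sum.elim (U *ᵥ ξ) (Sum.elim (ξ - ρ) (-ξ - ρ)) := by
    simp [madEpigraphMatrix, fromBlocks_mulVec, neg_mulVec, ← Sum.elim_add_add, sub_eq_add_neg]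
  rw [hmul, Sum.elim_le_elim_iff, Sum.elim_le_elim_iff, sub_le_comm, sub_le_comm (b := ρ),
    ← neg_sub', abs, sup_le_iff]

theorem sumElim_vecMul_madEpigraphMatrix [Fintype m] [Fintype n]
    (U : Matrix m n 𝕜) (ψ : m → 𝕜) (π τ : n → 𝕜) :
    Sum.elim ψ (Sum.elim π τ) ᵥ* madEpigraphMatrix U =
      Sum.elim (ψ ᵥ* U + (π - τ)) (-(π + τ)) := by
  simp [madEpigraphMatrix, vecMul_fromBlocks, vecMul_neg, sub_eq_add_neg, add_comm (-τ)]

theorem forall_sub_sum_mul_abs_le_iff_madEpigraphMatrix [LinearOrder 𝕜] [IsOrderedRing 𝕜]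
    [Fintype n] (U : Matrix m n 𝕜) (t : m → 𝕜) (β μ : n → 𝕜) {κ : n → 𝕜} (hκ : 0 ≤ κ) (d : 𝕜) :
    (∀ ξ, U *ᵥ ξ ≤ t → β ⬝ᵥ ξ - ∑ k, κ k * |ξ k - μ k| ≤ d) ↔
      ∀ z, madEpigraphMatrix U *ᵥ z ≤ Sum.elim t (Sum.elim μ (-μ)) →
        Sum.elim β (-κ) ⬝ᵥ z ≤ d := by
  have hepi ξ : β ⬝ᵥ ξ - ∑ k, κ k * |ξ k - μ k| ≤ d ↔
      ∀ ρ, |ξ - μ| ≤ ρ → β ⬝ᵥ ξ - κ ⬝ᵥ ρ ≤ d :=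
    sub_sum_mul_abs_le_iff hκ (ξ - μ) _ d
  simp only [hepi, (Equiv.sumArrowEquivProdArrow n n 𝕜).forall_congr_left,
    Equiv.sumArrowEquivProdArrow, Equiv.coe_fn_symm_mk, Prod.forall,
    madEpigraphMatrix_mulVec_le_iff, sumElim_dotProduct_sumElim, neg_dotProduct,
    ← sub_eq_add_neg, and_imp]
  exact forall_congr' fun _ => forall_comm

theorem exists_vecMul_madEpigraphMatrix_eq_iff {𝕜 : Type*} [CommRing 𝕜] [LE 𝕜]
    [Fintype m] [Fintype n] (U : Matrix m n 𝕜) (t : m → 𝕜) (β μ κ : n → 𝕜) (d : 𝕜) :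
    (∃ y, 0 ≤ y ∧ y ᵥ* madEpigraphMatrix U = Sum.elim β (-κ) ∧
        y ⬝ᵥ Sum.elim t (Sum.elim μ (-μ)) ≤ d) ↔
      ∃ (π τ : n → 𝕜) (ψ : m → 𝕜), 0 ≤ π ∧ 0 ≤ τ ∧ 0 ≤ ψ ∧
        π + τ = κ ∧ β + τ = π + Uᵀ *ᵥ ψ ∧ (π - τ) ⬝ᵥ μ + ψ ⬝ᵥ t ≤ d := by
  have gradient_iff ψ (π τ : n → 𝕜) : ψ ᵥ* U + (π - τ) = β ↔ β + τ = π + Uᵀ *ᵥ ψ := by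
    rw [mulVec_transpose, ← add_sub_assoc, sub_eq_iff_eq_add, eq_comm, add_comm π]
  have objective_eq (ψ : m → 𝕜) (π τ : n → 𝕜) :
      ψ ⬝ᵥ t + (π ⬝ᵥ μ + τ ⬝ᵥ -μ) = (π - τ) ⬝ᵥ μ + ψ ⬝ᵥ t := by
    rw [dotProduct_neg, ← sub_eq_add_neg, ← sub_dotProduct, add_comm]
  simp only [(Equiv.sumArrowEquivProdArrow _ _ 𝕜).exists_congr_left,
    Equiv.sumArrowEquivProdArrow, Equiv.coe_fn_symm_mk, Prod.exists,
    sumElim_vecMul_madEpigraphMatrix, Sum.elim_eq_iff, neg_inj, ← Sum.elim_zero_zero,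
    Sum.elim_le_elim_iff, sumElim_dotProduct_sumElim, gradient_iff, objective_eq]
  exact ⟨fun ⟨ψ, π, τ, ⟨hψ, hπ, hτ⟩, ⟨hβ, hκ⟩, hd⟩ => ⟨π, τ, ψ, hπ, hτ, hψ, hκ, hβ, hd⟩,
    fun ⟨π, τ, ψ, hπ, hτ, hψ, hκ, hβ, hd⟩ => ⟨ψ, π, τ, ⟨hψ, hπ, hτ⟩, ⟨hβ, hκ⟩, hd⟩⟩

end Epigraph

theorem meanMAD_first_constraint_dualization_general {𝕜 m n : Type*} [Field 𝕜] [LinearOrder 𝕜]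
    [IsStrictOrderedRing 𝕜] [Fintype m] [Fintype n] (U : Matrix m n 𝕜) (t : m → 𝕜)
    (hne : ∃ ξ, U *ᵥ ξ ≤ t) (α : 𝕜) (β μ κ : n → 𝕜) (hκ : 0 ≤ κ) (c : 𝕜) :
    (∀ ξ, U *ᵥ ξ ≤ t → α + β ⬝ᵥ ξ - ∑ k, κ k * |ξ k - μ k| ≤ c) ↔
      ∃ (π τ : n → 𝕜) (ψ : m → 𝕜), 0 ≤ π ∧ 0 ≤ τ ∧ 0 ≤ ψ ∧
        π + τ = κ ∧ β + τ = π + Uᵀ *ᵥ ψ ∧ α + (π - τ) ⬝ᵥ μ + ψ ⬝ᵥ t ≤ c := by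
  classical
  have hne_epi : ∃ z, madEpigraphMatrix U *ᵥ z ≤ Sum.elim t (Sum.elim μ (-μ)) :=
    hne.imp' (fun ξ => Sum.elim ξ |ξ - μ|) fun ξ hξ =>
      (madEpigraphMatrix_mulVec_le_iff U t μ ξ _).2 ⟨hξ, le_rfl⟩
  simp only [add_sub_assoc, add_assoc, ← le_sub_iff_add_le' (a := α)]
  rw [forall_sub_sum_mul_abs_le_iff_madEpigraphMatrix U t β μ hκ,
    forall_mulVec_le_dotProduct_le_iff hne_epi, exists_vecMul_madEpigraphMatrix_eq_iff]

/-- **Dualization of the first semi-infinite mean-MAD dual constraint.** Over a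
nonempty bounded polyhedron `Ξ = {ξ : U ξ ≤ t}`, the robust constraint
`α + βᵀξ − Σ_k κ_k |ξ_k − μ_k| ≤ c` for all `ξ ∈ Ξ` (with `κ ≥ 0`) is
equivalent to feasibility of the finite linear system in nonnegative dual
multipliers `π, τ, ψ`. -/
theorem meanMAD_first_constraint_dualization
    {K W : ℕ}
    (U : Matrix (Fin W) (Fin K) ℝ) (t : Fin W → ℝ)
    (hne : ∃ ξ : Fin K → ℝ, U.mulVec ξ ≤ t)
    (hbd : Bornology.IsBounded {ξ : Fin K → ℝ | U.mulVec ξ ≤ t})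
    (α : ℝ) (β μ κ : Fin K → ℝ) (hκ : 0 ≤ κ) (c : ℝ) :
    (∀ ξ : Fin K → ℝ, U.mulVec ξ ≤ t →
        α + β ⬝ᵥ ξ - (∑ k, κ k * |ξ k - μ k|) ≤ c)
      ↔ ∃ (π τ : Fin K → ℝ) (ψ : Fin W → ℝ),
          0 ≤ π ∧ 0 ≤ τ ∧ 0 ≤ ψ ∧
          π + τ = κ ∧
          β + τ = π + U.transpose.mulVec ψ ∧
          α + (π - τ) ⬝ᵥ μ + ψ ⬝ᵥ t ≤ c :=
  meanMAD_first_constraint_dualization_general U t hne α β μ κ hκ c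
end

section
/- Let U ∈ ℝ^{W×K}, t ∈ ℝ^W, a ∈ ℝ^K, b ∈ ℝ, α ∈ ℝ, β ∈ ℝ^K, μ ∈ ℝ^K, κ ∈ ℝ^K. Suppose there exist π ∈ ℝ^K, τ ∈ ℝ^K, ψ ∈ ℝ^W, all componentwise nonnegative, such that π + τ = κ, β + a + τ = π + U^T ψ, and α + (π − τ)^T μ + ψ^T t ≤ b. Then for every ξ ∈ ℝ^K with Uξ ≤ t and a^T ξ > b, it holds that α + β^T ξ − Σ_k κ_k |ξ_k − μ_k| ≤ 0. -/
/-!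
Put `δ = π - τ`. Nonnegativity of `π` and `τ` together with `π + τ = κ` gives `|δ| ≤ κ`, so
`δᵀ(ξ - μ) ≤ κᵀ|ξ - μ|`; and `U ξ ≤ t`, `0 ≤ ψ` give `ψᵀ U ξ ≤ ψᵀ t`. Pairing `β + a = δ + Uᵀψ`
with `ξ` and inserting both estimates bounds the objective by `b - aᵀξ`.
-/

open Matrix

theorem abs_sub_le_add_of_nonneg {G : Type*} [AddCommGroup G] [Lattice G] [IsOrderedAddMonoid G]
    {x y : G} (hx : 0 ≤ x) (hy : 0 ≤ y) : |x - y| ≤ x + y := by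
  simpa only [← sub_eq_add_neg, abs_neg, abs_of_nonneg hx, abs_of_nonneg hy] using
    abs_add_le x (-y)

section WeakDuality

variable {R m n : Type*} [Fintype m] [Fintype n]

theorem dotProduct_le_dotProduct_abs_of_abs_le [Ring R] [LinearOrder R] [IsOrderedRing R]
    {δ κ : n → R} (hδ : |δ| ≤ κ) (v : n → R) : δ ⬝ᵥ v ≤ κ ⬝ᵥ |v| :=
  Finset.sum_le_sum fun i _ =>
    calc
      δ i * v i ≤ |δ i * v i| := le_abs_self _
      _ = |δ i| * |v i| := abs_mul _ _
      _ ≤ κ i * |v i| := mul_le_mul_of_nonneg_right (hδ i) (abs_nonneg _)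

theorem vecMul_dotProduct_le_of_mulVec_le [Semiring R] [PartialOrder R] [IsOrderedRing R]
    {U : Matrix m n R} {t ψ : m → R} {ξ : n → R} (hψ : 0 ≤ ψ) (hξ : U *ᵥ ξ ≤ t) :
    ψ ᵥ* U ⬝ᵥ ξ ≤ ψ ⬝ᵥ t := by
  rw [← dotProduct_mulVec]
  exact dotProduct_le_dotProduct_of_nonneg_left hξ hψ

theorem meanMAD_second_constraint_weak_duality_general
    [Ring R] [LinearOrder R] [IsOrderedRing R]
    {U : Matrix m n R} {t ψ : m → R} {a β μ κ δ ξ : n → R} {b α : R}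
    (hδ : |δ| ≤ κ) (hψ : 0 ≤ ψ) (h_slope : β + a = δ + ψ ᵥ* U)
    (h_const : α + δ ⬝ᵥ μ + ψ ⬝ᵥ t ≤ b) (hξ : U *ᵥ ξ ≤ t) :
    α + β ⬝ᵥ ξ - κ ⬝ᵥ |ξ - μ| ≤ b - a ⬝ᵥ ξ := by
  have h_pairing : β ⬝ᵥ ξ + a ⬝ᵥ ξ = δ ⬝ᵥ ξ + ψ ᵥ* U ⬝ᵥ ξ := by
    rw [← add_dotProduct, h_slope, add_dotProduct]
  have h_deviation : δ ⬝ᵥ ξ ≤ κ ⬝ᵥ |ξ - μ| + δ ⬝ᵥ μ := by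
    rw [← sub_le_iff_le_add, ← dotProduct_sub]
    exact dotProduct_le_dotProduct_abs_of_abs_le hδ (ξ - μ)
  have h_support : ψ ᵥ* U ⬝ᵥ ξ ≤ ψ ⬝ᵥ t := vecMul_dotProduct_le_of_mulVec_le hψ hξ
  calc
    α + β ⬝ᵥ ξ - κ ⬝ᵥ |ξ - μ|
      = α + (δ ⬝ᵥ ξ + ψ ᵥ* U ⬝ᵥ ξ) - κ ⬝ᵥ |ξ - μ| - a ⬝ᵥ ξ := by rw [← h_pairing]; abel
    _ ≤ α + (κ ⬝ᵥ |ξ - μ| + δ ⬝ᵥ μ + ψ ⬝ᵥ t) - κ ⬝ᵥ |ξ - μ| - a ⬝ᵥ ξ := by gcongr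
    _ = α + δ ⬝ᵥ μ + ψ ⬝ᵥ t - a ⬝ᵥ ξ := by abel
    _ ≤ b - a ⬝ᵥ ξ := by gcongr

end WeakDuality

/-- **Weak duality for the second semi-infinite mean-MAD dual constraint.**
If the finite linear system in nonnegative multipliers `π, τ, ψ` (after the
normalization `λ = 1`) is feasible, then for every `ξ` with `U ξ ≤ t` and
`aᵀξ > b` one has `α + βᵀξ − Σ_k κ_k |ξ_k − μ_k| ≤ 0`. -/
theorem meanMAD_second_constraint_weak_duality
    {K W : ℕ}
    (U : Matrix (Fin W) (Fin K) ℝ) (t : Fin W → ℝ)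
    (a : Fin K → ℝ) (b : ℝ) (α : ℝ) (β μ κ : Fin K → ℝ)
    (π τ : Fin K → ℝ) (ψ : Fin W → ℝ)
    (hπ : 0 ≤ π) (hτ : 0 ≤ τ) (hψ : 0 ≤ ψ)
    (h1 : π + τ = κ)
    (h2 : β + a + τ = π + U.transpose.mulVec ψ)
    (h3 : α + (π - τ) ⬝ᵥ μ + ψ ⬝ᵥ t ≤ b) :
    ∀ ξ : Fin K → ℝ, U.mulVec ξ ≤ t → a ⬝ᵥ ξ > b →
      α + β ⬝ᵥ ξ - (∑ k, κ k * |ξ k - μ k|) ≤ 0 := by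
  intro ξ hξ ha
  have hδ : |π - τ| ≤ κ := h1 ▸ abs_sub_le_add_of_nonneg hπ hτ
  have h_slope : β + a = π - τ + ψ ᵥ* U := by
    rw [← mulVec_transpose]
    linear_combination h2
  exact (meanMAD_second_constraint_weak_duality_general hδ hψ h_slope h3 hξ).trans
    (sub_nonpos.2 ha.le)
end

section
/- Let Ξ = {ξ ∈ ℝ^K : Uξ ≤ t} be compact, μ ∈ ℝ^K, σ ∈ ℝ^K with σ ≥ 0, a ∈ ℝ^K, b ∈ ℝ, ε ∈ (0,1). Suppose there exist α' ∈ ℝ, β' ∈ ℝ^K, κ' ∈ ℝ^K with κ' ≥ 0, λ' > 0, and π'₁, τ'₁, π'₂, τ'₂ ∈ ℝ^K, ψ'₁, ψ'₂ ∈ ℝ^W, all componentwise nonnegative, satisfying: α' + β'^T μ − κ'^T σ ≥ (1 − ε) λ'; α' + (π'₁ − τ'₁)^T μ + ψ'₁^T t ≤ λ'; β' + τ'₁ = π'₁ + U^T ψ'₁; π'₁ + τ'₁ = κ'; α' + (π'₂ − τ'₂)^T μ + ψ'₂^T t ≤ b; β' + a + τ'₂ = π'₂ + U^T ψ'₂;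 π'₂ + τ'₂ = κ'. Then every Borel probability measure P on ℝ^K with P(Ξ) = 1, ∫ ξ dP(ξ) = μ, and ∫ |ξ_k − μ_k| dP(ξ) ≤ σ_k for all k, satisfies P({ξ : a^T ξ ≤ b}) ≥ 1 − ε. -/
open Matrix MeasureTheory

/-!
The multipliers of the dual system define the Lagrangian `g ξ = α + β ⬝ᵥ ξ - κ ⬝ᵥ |ξ - μ|`, whose
expectation is controlled by the mean and MAD constraints: it is at least
`α + β ⬝ᵥ μ - κ ⬝ᵥ σ ≥ (1 - ε) * lam`. Linear programming weak duality on the polyhedron gives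
`g ξ ≤ lam` and `g ξ + a ⬝ᵥ ξ ≤ b` there, so `g` is at most `lam` on the event `a ⬝ᵥ ξ ≤ b` and at
most `0` off it. Integrating, `(1 - ε) * lam ≤ P (a ⬝ᵥ ξ ≤ b) * lam`.
-/

section Duality

variable {R ι ω : Type*} [Fintype ι]

lemma transpose_mulVec_dotProduct_le [CommSemiring R] [PartialOrder R] [IsOrderedRing R]
    [Fintype ω] {U : Matrix ω ι R} {t s : ω → R} {x : ι → R} (hs : 0 ≤ s) (hx : U *ᵥ x ≤ t) :
    (Uᵀ *ᵥ s) ⬝ᵥ x ≤ s ⬝ᵥ t := by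
  rw [mulVec_transpose, ← dotProduct_mulVec]
  exact dotProduct_le_dotProduct_of_nonneg_left hx hs

lemma sub_dotProduct_le_add_dotProduct_abs [Ring R] [LinearOrder R] [IsOrderedRing R]
    {p q : ι → R} (hp : 0 ≤ p) (hq : 0 ≤ q) (x : ι → R) :
    (p - q) ⬝ᵥ x ≤ (p + q) ⬝ᵥ |x| := by
  have hpx : p ⬝ᵥ x ≤ p ⬝ᵥ |x| := dotProduct_le_dotProduct_of_nonneg_left (le_abs_self x) hp
  have hqx : q ⬝ᵥ -x ≤ q ⬝ᵥ |x| := dotProduct_le_dotProduct_of_nonneg_left (neg_le_abs x) hq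
  calc (p - q) ⬝ᵥ x = p ⬝ᵥ x + q ⬝ᵥ -x := by rw [sub_dotProduct, dotProduct_neg, sub_eq_add_neg]
    _ ≤ p ⬝ᵥ |x| + q ⬝ᵥ |x| := add_le_add hpx hqx
    _ = (p + q) ⬝ᵥ |x| := (add_dotProduct p q |x|).symm

/-- The Lagrangian of the mean-MAD moment problem at a realization `ξ`, with multipliers
`α`, `β`, `κ` for normalization, mean and mean absolute deviation. The absolute value is
componentwise. -/
def meanMADLagrangian [Ring R] [Lattice R] (α : R) (β κ μ ξ : ι → R) : R :=
  α + β ⬝ᵥ ξ - κ ⬝ᵥ |ξ - μ|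

lemma meanMADLagrangian_add [Ring R] [Lattice R] (α : R) (β c κ μ ξ : ι → R) :
    meanMADLagrangian α (β + c) κ μ ξ = meanMADLagrangian α β κ μ ξ + c ⬝ᵥ ξ := by
  simp only [meanMADLagrangian, add_dotProduct]
  abel

lemma meanMADLagrangian_le [CommRing R] [LinearOrder R] [IsOrderedRing R] [Fintype ω]
    {U : Matrix ω ι R} {t s : ω → R} {β p q ξ : ι → R} (α : R) (μ : ι → R)
    (hp : 0 ≤ p) (hq : 0 ≤ q) (hs : 0 ≤ s) (hβ : β + q = p + Uᵀ *ᵥ s) (hξ : U *ᵥ ξ ≤ t) :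
    meanMADLagrangian α β (p + q) μ ξ ≤ α + (p - q) ⬝ᵥ μ + s ⬝ᵥ t := by
  have hpolyhedron := transpose_mulVec_dotProduct_le hs hξ
  have hdeviation := sub_dotProduct_le_add_dotProduct_abs hp hq (ξ - μ)
  rw [dotProduct_sub, sub_le_iff_le_add'] at hdeviation
  have hβξ : β ⬝ᵥ ξ = (p - q) ⬝ᵥ ξ + (Uᵀ *ᵥ s) ⬝ᵥ ξ := by
    rw [← add_dotProduct, sub_add_eq_add_sub, ← hβ, add_sub_cancel_right]
  rw [meanMADLagrangian, hβξ, sub_le_iff_le_add]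
  calc α + ((p - q) ⬝ᵥ ξ + (Uᵀ *ᵥ s) ⬝ᵥ ξ)
      ≤ α + ((p - q) ⬝ᵥ μ + (p + q) ⬝ᵥ |ξ - μ| + s ⬝ᵥ t) := by gcongr
    _ = α + (p - q) ⬝ᵥ μ + s ⬝ᵥ t + (p + q) ⬝ᵥ |ξ - μ| := by abel

lemma meanMADLagrangian_le_indicator [Ring R] [LinearOrder R] [IsOrderedRing R]
    {α b lam : R} {β κ μ a ξ : ι → R} (hlam : meanMADLagrangian α β κ μ ξ ≤ lam)
    (hb : meanMADLagrangian α (β + a) κ μ ξ ≤ b) :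
    meanMADLagrangian α β κ μ ξ ≤ {ζ | a ⬝ᵥ ζ ≤ b}.indicator (fun _ => lam) ξ := by
  refine Set.le_indicator_apply (fun _ => hlam) fun hoff => ?_
  have hb_lt : b < a ⬝ᵥ ξ := not_le.mp hoff
  rw [meanMADLagrangian_add] at hb
  exact nonpos_of_add_le_left (hb.trans hb_lt.le)

end Duality

section Integration

variable {Ω ι : Type*} {m : MeasurableSpace Ω} {P : Measure Ω}

lemma integrable_of_continuous_of_ae_mem_isCompact {E : Type*} [TopologicalSpace Ω] [T2Space Ω]
    [OpensMeasurableSpace Ω] [IsFiniteMeasureOnCompacts P] [NormedAddCommGroup E]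
    [SecondCountableTopologyEither Ω E] {C : Set Ω} {f : Ω → E}
    (hf : Continuous f) (hC : IsCompact C) (hP : ∀ᵐ x ∂P, x ∈ C) : Integrable f P := by
  rw [← Measure.restrict_eq_self_of_ae_mem hP]
  exact hf.continuousOn.integrableOn_compact hC

lemma integral_le_measureReal_mul_of_ae_le_indicator [IsFiniteMeasure P] {f : Ω → ℝ} {S : Set Ω}
    {c : ℝ} (hf : Integrable f P) (hS : MeasurableSet S)
    (hle : f ≤ᵐ[P] S.indicator fun _ => c) : ∫ x, f x ∂P ≤ P.real S * c :=
  calc ∫ x, f x ∂P ≤ ∫ x, S.indicator (fun _ => c) x ∂P :=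
        integral_mono_ae hf ((integrable_const c).indicator hS) hle
    _ = P.real S * c := integral_indicator_const c hS

variable [Fintype ι]

lemma integrable_dotProduct {𝕜 : Type*} [RCLike 𝕜] {f : Ω → ι → 𝕜} (v : ι → 𝕜)
    (hf : ∀ i, Integrable (fun x => f x i) P) : Integrable (fun x => v ⬝ᵥ f x) P :=
  integrable_finsetSum _ fun i _ => (hf i).const_mul (v i)

lemma integral_dotProduct {𝕜 : Type*} [RCLike 𝕜] {f : Ω → ι → 𝕜} (v : ι → 𝕜)
    (hf : ∀ i, Integrable (fun x => f x i) P) :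
    ∫ x, v ⬝ᵥ f x ∂P = v ⬝ᵥ fun i => ∫ x, f x i ∂P := by
  simp only [dotProduct]
  rw [integral_finsetSum _ fun i _ => (hf i).const_mul (v i)]
  simp only [integral_const_mul]

variable {f : Ω → ι → ℝ}

lemma integrable_meanMADLagrangian [IsFiniteMeasure P] (α : ℝ) (β κ μ : ι → ℝ)
    (hf : ∀ i, Integrable (fun x => f x i) P) :
    Integrable (fun x => meanMADLagrangian α β κ μ (f x)) P :=
  ((integrable_const α).add (integrable_dotProduct β hf)).sub <|
    integrable_dotProduct κ fun i => ((hf i).sub (integrable_const (μ i))).abs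

lemma integral_meanMADLagrangian [IsProbabilityMeasure P] (α : ℝ) (β κ μ : ι → ℝ)
    (hf : ∀ i, Integrable (fun x => f x i) P) :
    ∫ x, meanMADLagrangian α β κ μ (f x) ∂P =
      α + (β ⬝ᵥ fun i => ∫ x, f x i ∂P) - κ ⬝ᵥ fun i => ∫ x, |f x i - μ i| ∂P := by
  have hdev (i : ι) : Integrable (fun x => |f x - μ| i) P :=
    ((hf i).sub (integrable_const (μ i))).abs
  have hβ := integrable_dotProduct β hf
  simp only [meanMADLagrangian]
  rw [integral_sub ((integrable_const α).fun_add hβ) (integrable_dotProduct κ hdev),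
    integral_add (integrable_const α) hβ, integral_dotProduct β hf, integral_dotProduct κ hdev]
  simp only [integral_const, probReal_univ, one_smul, Pi.abs_apply, Pi.sub_apply]

lemma le_integral_meanMADLagrangian [IsProbabilityMeasure P] {κ μ σ : ι → ℝ} (α : ℝ) (β : ι → ℝ)
    (hκ : 0 ≤ κ) (hf : ∀ i, Integrable (fun x => f x i) P)
    (hmean : ∀ i, ∫ x, f x i ∂P = μ i) (hmad : ∀ i, ∫ x, |f x i - μ i| ∂P ≤ σ i) :
    α + β ⬝ᵥ μ - κ ⬝ᵥ σ ≤ ∫ x, meanMADLagrangian α β κ μ (f x) ∂P := by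
  rw [integral_meanMADLagrangian α β κ μ hf, funext hmean]
  exact sub_le_sub_left (dotProduct_le_dotProduct_of_nonneg_left hmad hκ) _

end Integration

theorem meanMAD_drcc_sufficiency_general
    {ι ω : Type*} [Fintype ι] [Fintype ω]
    (U : Matrix ω ι ℝ) (t : ω → ℝ) (μ σ a : ι → ℝ) (b ε : ℝ)
    (hdual : ∃ (α : ℝ) (β κ : ι → ℝ) (lam : ℝ) (π₁ τ₁ π₂ τ₂ : ι → ℝ) (ψ₁ ψ₂ : ω → ℝ),
      0 ≤ κ ∧ 0 < lam ∧
      0 ≤ π₁ ∧ 0 ≤ τ₁ ∧ 0 ≤ π₂ ∧ 0 ≤ τ₂ ∧ 0 ≤ ψ₁ ∧ 0 ≤ ψ₂ ∧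
      α + β ⬝ᵥ μ - κ ⬝ᵥ σ ≥ (1 - ε) * lam ∧
      α + (π₁ - τ₁) ⬝ᵥ μ + ψ₁ ⬝ᵥ t ≤ lam ∧
      β + τ₁ = π₁ + Uᵀ *ᵥ ψ₁ ∧
      π₁ + τ₁ = κ ∧
      α + (π₂ - τ₂) ⬝ᵥ μ + ψ₂ ⬝ᵥ t ≤ b ∧
      β + a + τ₂ = π₂ + Uᵀ *ᵥ ψ₂ ∧
      π₂ + τ₂ = κ)
    (P : Measure (ι → ℝ)) [IsProbabilityMeasure P]
    (hsupp : ∀ᵐ ξ ∂P, U *ᵥ ξ ≤ t) (hint : ∀ i, Integrable (fun ξ => ξ i) P)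
    (hmean : ∀ i, ∫ ξ, ξ i ∂P = μ i) (hmad : ∀ i, ∫ ξ, |ξ i - μ i| ∂P ≤ σ i) :
    1 - ε ≤ P.real {ξ | a ⬝ᵥ ξ ≤ b} := by
  obtain ⟨α, β, κ, lam, π₁, τ₁, π₂, τ₂, ψ₁, ψ₂, hκ, hlam, hπ₁, hτ₁, hπ₂, hτ₂, hψ₁, hψ₂,
    hobj, hval₁, hβ₁, hκ₁, hval₂, hβ₂, hκ₂⟩ := hdual
  have hmeas : MeasurableSet {ξ | a ⬝ᵥ ξ ≤ b} :=
    measurableSet_le (by unfold dotProduct; fun_prop) measurable_const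
  have hle : meanMADLagrangian α β κ μ ≤ᵐ[P] {ξ | a ⬝ᵥ ξ ≤ b}.indicator fun _ => lam := by
    filter_upwards [hsupp] with ξ hξ
    have hle_lam := (meanMADLagrangian_le α μ hπ₁ hτ₁ hψ₁ hβ₁ hξ).trans hval₁
    have hle_b := (meanMADLagrangian_le α μ hπ₂ hτ₂ hψ₂ hβ₂ hξ).trans hval₂
    rw [hκ₁] at hle_lam
    rw [hκ₂] at hle_b
    exact meanMADLagrangian_le_indicator hle_lam hle_b
  refine le_of_mul_le_mul_right ?_ hlam
  calc (1 - ε) * lam ≤ α + β ⬝ᵥ μ - κ ⬝ᵥ σ := hobj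
    _ ≤ ∫ ξ, meanMADLagrangian α β κ μ ξ ∂P := le_integral_meanMADLagrangian α β hκ hint hmean hmad
    _ ≤ P.real {ξ | a ⬝ᵥ ξ ≤ b} * lam := integral_le_measureReal_mul_of_ae_le_indicator
        (integrable_meanMADLagrangian α β κ μ hint) hmeas hle

/-- **Sufficiency direction of Proposition 3.** If the finite linear dual
system (with `λ' > 0`) is feasible, then every probability distribution
supported on the compact polyhedron `Ξ = {ξ : U ξ ≤ t}` with mean `μ` and
componentwise mean absolute deviation bounded by `σ` assigns probability at
least `1 − ε` to `{ξ : aᵀξ ≤ b}`. -/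
theorem meanMAD_drcc_sufficiency
    {K W : ℕ}
    (U : Matrix (Fin W) (Fin K) ℝ) (t : Fin W → ℝ)
    (hΞ : IsCompact {ξ : Fin K → ℝ | U.mulVec ξ ≤ t})
    (μ σ : Fin K → ℝ) (hσ : 0 ≤ σ)
    (a : Fin K → ℝ) (b : ℝ) (ε : ℝ) (hε : ε ∈ Set.Ioo (0 : ℝ) 1)
    (hdual : ∃ (α' : ℝ) (β' κ' : Fin K → ℝ) (lam' : ℝ)
        (π'₁ τ'₁ π'₂ τ'₂ : Fin K → ℝ) (ψ'₁ ψ'₂ : Fin W → ℝ),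
          0 ≤ κ' ∧ 0 < lam' ∧
          0 ≤ π'₁ ∧ 0 ≤ τ'₁ ∧ 0 ≤ π'₂ ∧ 0 ≤ τ'₂ ∧ 0 ≤ ψ'₁ ∧ 0 ≤ ψ'₂ ∧
          α' + β' ⬝ᵥ μ - κ' ⬝ᵥ σ ≥ (1 - ε) * lam' ∧
          α' + (π'₁ - τ'₁) ⬝ᵥ μ + ψ'₁ ⬝ᵥ t ≤ lam' ∧
          β' + τ'₁ = π'₁ + U.transpose.mulVec ψ'₁ ∧
          π'₁ + τ'₁ = κ' ∧
          α' + (π'₂ - τ'₂) ⬝ᵥ μ + ψ'₂ ⬝ᵥ t ≤ b ∧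
          β' + a + τ'₂ = π'₂ + U.transpose.mulVec ψ'₂ ∧
          π'₂ + τ'₂ = κ') :
    ∀ (P : Measure (Fin K → ℝ)) [IsProbabilityMeasure P],
      P {ξ : Fin K → ℝ | U.mulVec ξ ≤ t} = 1 →
      (∀ k, ∫ ξ, ξ k ∂P = μ k) →
      (∀ k, ∫ ξ, |ξ k - μ k| ∂P ≤ σ k) →
      (P {ξ : Fin K → ℝ | a ⬝ᵥ ξ ≤ b}).toReal ≥ 1 - ε := by
  intro P _ hP
  have hsupp := (mem_ae_iff_prob_eq_one hΞ.measurableSet).2 hP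
  exact meanMAD_drcc_sufficiency_general U t μ σ a b ε hdual P hsupp fun k =>
    integrable_of_continuous_of_ae_mem_isCompact (continuous_apply k) hΞ hsupp
end
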